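/- For every ordered graph F, the relative Turán density ρ_<(F) equals 0 if and only if F does not contain a monotone path of length two. -/

import Mathlib

open scoped Classical

/-- `G` contains an ordered copy of `F`: a strictly order-preserving map
sending edges to edges. -/
def ContainsOrderedCopy {α β : Type*} [Preorder α] [Preorder β]
    (F : SimpleGraph α) (G : SimpleGraph β) : Prop :=
  ∃ φ : α → β, StrictMono φ ∧ ∀ u v, F.Adj u v → G.Adj (φ u) (φ v)

/-- The number of edges of a simple graph. -/
noncomputable def edgeCount {α : Type*} (G : SimpleGraph α) : ℕ := G.edgeSet.ncard

/-- `ρ_<(F, G)`: the largest edge-density of an `F`-free (ordered) subgraph of `G`. -/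
noncomputable def relTuranDensityIn {α β : Type*} [Preorder α] [Preorder β]
    (F : SimpleGraph α) (G : SimpleGraph β) : ℝ :=
  sSup {r : ℝ | ∃ G' : G.Subgraph, ¬ ContainsOrderedCopy F G'.coe ∧
    r = (edgeCount G'.coe : ℝ) / (edgeCount G : ℝ)}

/-- `ρ_<(F)`: the relative Turán density of an ordered graph `F`, the infimum of
`ρ_<(F, G)` over all finite ordered graphs `G` with at least one edge. -/
noncomputable def relTuranDensity {α : Type*} [Preorder α] (F : SimpleGraph α) : ℝ :=
  sInf {r : ℝ | ∃ (n : ℕ) (G : SimpleGraph (Fin n)),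
    1 ≤ edgeCount G ∧ r = relTuranDensityIn F G}

/-- The cube `{0,1}^d`, ordered lexicographically (index `0` most significant). -/
abbrev Cube (d : ℕ) := Lex (Fin d → Bool)

noncomputable instance (priority := 2000) (d : ℕ) : LinearOrder (Cube d) :=
  haveI : WellFoundedLT (Fin d) := inferInstance
  inferInstance

instance instFintypeLexSelf {α : Type*} [Fintype α] : Fintype (Lex α) := ‹Fintype α›

/-- `δ(x, y) = ℓ`, with positions `1`-indexed: the least (1-indexed) coordinate at which
`x` and `y` differ is `ℓ`. -/
def atLevel {d : ℕ} (ℓ : ℕ) (x y : Cube d) : Prop :=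
  ∃ i : Fin d, (i : ℕ) + 1 = ℓ ∧ ofLex x i ≠ ofLex y i ∧ ∀ j < i, ofLex x j = ofLex y j

/-- `e_ℓ(G)`: the number of level-`ℓ` edges of a graph `G` on `{0,1}^d`. -/
noncomputable def levelCount {d : ℕ} (G : SimpleGraph (Cube d)) (ℓ : ℕ) : ℕ :=
  {p : Cube d × Cube d | p.1 < p.2 ∧ G.Adj p.1 p.2 ∧ atLevel ℓ p.1 p.2}.ncard

/-- `τ_{ℓ,d} = 2 ^ (2d - ℓ - 1)`. -/
def tau (d ℓ : ℕ) : ℕ := 2 ^ (2 * d - ℓ - 1)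

/-- The level `ℓ` is `α`-rich with respect to `G`, i.e. `e_ℓ(G) ≥ α · τ_{ℓ,d}`. -/
def IsRichLevel {d : ℕ} (G : SimpleGraph (Cube d)) (α : ℝ) (ℓ : ℕ) : Prop :=
  α * (tau d ℓ : ℝ) ≤ (levelCount G ℓ : ℝ)

/-- `G` is `(α, C)`-rich: at least `C` levels `ℓ ∈ [d]` are `α`-rich. -/
def IsRichGraph {d : ℕ} (G : SimpleGraph (Cube d)) (α C : ℝ) : Prop :=
  C ≤ ({ℓ : ℕ | ℓ ∈ Finset.Icc 1 d ∧ IsRichLevel G α ℓ}.ncard : ℝ)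

/-- The vertex set `{0,1}^d × [m]`, ordered lexicographically. -/
abbrev BlockVert (d m : ℕ) := Lex (Cube d × Fin m)

/-- `e_ℓ(R)` for a graph `R` on `{0,1}^d × [m]`: the number of edges whose endpoints lie in
blocks `B_x`, `B_y` with `δ(x,y) = ℓ`. -/
noncomputable def levelCountB {d m : ℕ} (R : SimpleGraph (BlockVert d m)) (ℓ : ℕ) : ℕ :=
  {p : BlockVert d m × BlockVert d m |
    p.1 < p.2 ∧ R.Adj p.1 p.2 ∧ atLevel ℓ (ofLex p.1).1 (ofLex p.2).1}.ncard

/-- Property (i) with accuracy `ε`: every level `ℓ ∈ [d]` has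
`(1−ε)·2^(d−1)·m² ≤ e_ℓ(R) ≤ (1+ε)·2^(d−1)·m²`. -/
def PropI {d m : ℕ} (R : SimpleGraph (BlockVert d m)) (ε : ℝ) : Prop :=
  ∀ ℓ ∈ Finset.Icc 1 d,
    (1 - ε) * 2 ^ (d - 1) * (m : ℝ) ^ 2 ≤ (levelCountB R ℓ : ℝ) ∧
    (levelCountB R ℓ : ℝ) ≤ (1 + ε) * 2 ^ (d - 1) * (m : ℝ) ^ 2

/-- Property (ii) with accuracy `ε`: for all distinct `x, y ∈ {0,1}^d` (say `δ(x,y) = ℓ`) and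
all `P ⊆ B_x`, `Q ⊆ B_y` of size at least `m^(2/3)`, the number of edges of `R` between `P`
and `Q` is at most `(1+ε)·2^(−d+ℓ)·|P|·|Q|`. -/
def PropII {d m : ℕ} (R : SimpleGraph (BlockVert d m)) (ε : ℝ) : Prop :=
  ∀ (x y : Cube d) (ℓ : ℕ), atLevel ℓ x y →
    ∀ P Q : Finset (Fin m),
      (m : ℝ) ^ ((2 : ℝ)/3) ≤ (P.card : ℝ) → (m : ℝ) ^ ((2 : ℝ)/3) ≤ (Q.card : ℝ) →
      ({pq : Fin m × Fin m | pq.1 ∈ P ∧ pq.2 ∈ Q ∧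
          R.Adj (toLex (x, pq.1)) (toLex (y, pq.2))}.ncard : ℝ) ≤
        (1 + ε) * 2 ^ ((ℓ : ℤ) - (d : ℤ)) * (P.card : ℝ) * (Q.card : ℝ)

/-- `F` contains a monotone path of length two: vertices `u < v < w` with
`uv, vw ∈ E(F)`. -/
def HasMonotonePathTwo {α : Type*} [Preorder α] (F : SimpleGraph α) : Prop :=
  ∃ u v w, u < v ∧ v < w ∧ F.Adj u v ∧ F.Adj v w

/-- The ordered graph `H_k` on `[k] × {0,1}` (ordered lexicographically), with edges
`(x,0)(y,1)` for `x ≤ y`. -/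
def Hgraph (k : ℕ) : SimpleGraph (Lex (Fin k × Bool)) :=
  SimpleGraph.fromRel (fun a b =>
    (ofLex a).2 = false ∧ (ofLex b).2 = true ∧ (ofLex a).1 ≤ (ofLex b).1)

/-!
If `F` has a monotone path of length two, two-colour the vertices of `G` at random and keep the
edges whose smaller end has colour `true` and whose larger end has colour `false`. No monotone path
of length two survives, and on average a quarter of the edges does, so `ρ_<(F) ≥ 1/4`
(`quarter_le`).

If `F` has no such path, every vertex of `F` has only earlier or only later neighbours, so `F`
embeds in the interleaved half graph `a₁ < b₁ < a₂ < b₂ < ⋯ < a_k < b_k` with edges `a_i b_j` for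
`i ≤ j`, where `k` is the number of vertices of `F` (`containsOrderedCopy_of_half_graph`). It
remains to find host graphs in which every positive proportion of the edges contains this half
graph.

The host consists of `D` levels with equally many edges. Its vertices carry words
`(x₁, s₁), …, (x_D, s_D)` with `x_j` a bit and `s_j` one of `M` letters, ordered lexicographically,
and a further word `c` which does not affect the order. In a level-`ℓ` edge `a < b`, the bits of
`a` and `b` differ exactly at `ℓ`, the letters `s` agree before `ℓ`, and the letters `c` agree from
`ℓ` on. Sample an upper vertex `b` and two fresh words; for each level `ℓ` with `x_ℓ(b) = 1` these
determine a lower neighbour `a_ℓ`, and the edge `a_ℓ b` is uniformly distributed on level `ℓ`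
(`sum_hits`). Let `L` be the set of levels for which `a_ℓ b` lies in the given subgraph. For
`ℓ ≤ t`, the vertex `a_ℓ` does not depend on the letter `s_t` of `b`. So, given everything but
`s_t`, for each possible value of `L` at most one value of `s_t` is such that no smaller value keeps
all the adjacencies `a_ℓ b` with `ℓ ∈ L`, `ℓ ≤ t`; call `t ∈ L` bad for this value. Thus `t` is bad
with probability at most `2 ^ D / M` (`card_bad_mul_le`). For levels `t₁ < ⋯ < t_k` in `L` that are
not bad, put `a_i = a_{t_i}` and let `b_i` be `b` with its letter at `t_i` decreased; this is a half
graph (`exists_half_graph`). Hence in a subgraph without it the average size of `L` is at most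
`k + D 2 ^ D / M`, whereas for the whole host it is `D / 2`. With `M = D 2 ^ D` the density of the
subgraph is at most `2 (k + 1) / D`.
-/

/-! ### The host graph and its samples -/

/-- A vertex of the host graph. The pairs `(branch j, split j)` form a word of length `D`, and
the vertex order is the lexicographic order of these words, ties being broken arbitrarily. The
word `tag` does not influence the order; it serves to give all levels equally many edges. -/
@[ext] structure Vtx (D M : ℕ) where
  /-- the branching bits -/
  branch : Fin D → Bool
  /-- the separating letters -/
  split : Fin D → Fin M
  /-- the order-irrelevant word -/
  tag : Fin D → Fin M

noncomputable instance (D M : ℕ) : Fintype (Vtx D M) :=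
  Fintype.ofInjective
    (fun v : Vtx D M => (v.branch, v.split, v.tag))
    (fun u v h => by
      simp only [Prod.mk.injEq] at h
      exact Vtx.ext h.1 h.2.1 h.2.2)

/-- The sample space: an upper vertex together with a fresh `split` word and a fresh `tag` word,
which are shared by all the lower vertices `low ω ℓ`. -/
abbrev Conf (D M : ℕ) := Vtx D M × (Fin D → Fin M) × (Fin D → Fin M)

/-- The level-`ℓ` edge relation, with `a` below `b`: the branch words differ exactly at `ℓ`, the
split words agree before `ℓ`, and the tag words agree from `ℓ` on. -/
def LevelAdj {D M : ℕ} (ℓ : Fin D) (a b : Vtx D M) : Prop :=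
  b.branch ℓ = true ∧ a.branch = Function.update b.branch ℓ false ∧
    (∀ j < ℓ, a.split j = b.split j) ∧ ∀ j, ¬ j < ℓ → a.tag j = b.tag j

/-- The random level-`ℓ` lower neighbour of the upper vertex of `ω`. -/
def low {D M : ℕ} (ω : Conf D M) (ℓ : Fin D) : Vtx D M where
  branch := Function.update ω.1.branch ℓ false
  split := fun j => if j < ℓ then ω.1.split j else ω.2.1 j
  tag := fun j => if j < ℓ then ω.2.2 j else ω.1.tag j

/-- Replace the separating letter at `t` of the upper vertex by `m`. -/
def shift {D M : ℕ} (ω : Conf D M) (t : Fin D) (m : Fin M) : Conf D M :=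
  (⟨ω.1.branch, Function.update ω.1.split t m, ω.1.tag⟩, ω.2)

/-- The levels at which the sampled pair is an edge belonging to `R`. -/
noncomputable def hits {D M : ℕ} (R : Vtx D M → Vtx D M → Prop) (ω : Conf D M) :
    Finset (Fin D) :=
  Finset.univ.filter fun ℓ => ω.1.branch ℓ = true ∧ R (low ω ℓ) ω.1

/-- A hit `t` is bad if no smaller separating letter at `t` preserves all the hits up to `t`. -/
def Bad {D M : ℕ} (R : Vtx D M → Vtx D M → Prop) (t : Fin D) (ω : Conf D M) : Prop :=
  t ∈ hits R ω ∧
    ¬ ∃ m < ω.1.split t, ∀ ℓ ∈ hits R ω, ℓ ≤ t → ℓ ∈ hits R (shift ω t m)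

/-- The lower vertices up to level `t` use fresh letters from their level on, so they do not see
the letter of the upper vertex at `t`. -/
lemma low_shift {D M : ℕ} (ω : Conf D M) (t ℓ : Fin D) (m : Fin M) (h : ℓ ≤ t) :
    low (shift ω t m) ℓ = low ω ℓ := by
  ext j
  · rfl
  · simp only [low, shift]
    split_ifs with hj
    · rw [Function.update_of_ne (ne_of_lt (lt_of_lt_of_le hj h))]
    · rfl
  · rfl

lemma levelAdj_low {D M : ℕ} (ω : Conf D M) (ℓ : Fin D) (h : ω.1.branch ℓ = true) :
    LevelAdj ℓ (low ω ℓ) ω.1 := by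
  refine ⟨h, rfl, fun j hj => ?_, fun j hj => ?_⟩ <;> simp [low, hj]

lemma levelAdj_unique {D M : ℕ} {ℓ ℓ' : Fin D} {a b : Vtx D M}
    (h : LevelAdj ℓ a b) (h' : LevelAdj ℓ' a b) : ℓ = ℓ' := by
  by_contra hne
  have h1 : a.branch ℓ = false := by rw [h.2.1]; simp
  have h2 : a.branch ℓ = b.branch ℓ := by rw [h'.2.1, Function.update_of_ne hne]
  rw [h2, h.1] at h1
  exact absurd h1 (by decide)

/-! ### Counting hits and bad levels -/

/-- Sampling is uniform on edges: each edge arises from exactly `|Fin D → Fin M|` samples, because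
the letters of the two fresh words that the lower vertex ignores (`split` before `ℓ`, `tag`
from `ℓ` on) together form an arbitrary word. -/
lemma sum_hits {D M : ℕ} (R : Vtx D M → Vtx D M → Prop) :
    ∑ ω : Conf D M, (hits R ω).card =
      (Finset.univ.filter fun q : Vtx D M × Vtx D M =>
        (∃ ℓ, LevelAdj ℓ q.1 q.2) ∧ R q.1 q.2).card * Fintype.card (Fin D → Fin M) := by
  rw [← Finset.card_sigma, ← Finset.card_univ (α := Fin D → Fin M), ← Finset.card_product]
  refine Finset.card_bij
    (fun p _ => ((low p.1 p.2, p.1.1),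
      fun j => if j < p.2 then p.1.2.1 j else p.1.2.2 j)) ?_ ?_ ?_
  · rintro ⟨ω, ℓ⟩ hp
    simp only [Finset.mem_sigma, Finset.mem_univ, true_and, hits, Finset.mem_filter] at hp
    simp only [Finset.mem_product, Finset.mem_filter, Finset.mem_univ, true_and, and_true]
    exact ⟨⟨ℓ, levelAdj_low ω ℓ hp.1⟩, hp.2⟩
  · rintro ⟨ω, ℓ⟩ hp ⟨ω', ℓ'⟩ hp' heq
    simp only [Finset.mem_sigma, Finset.mem_univ, true_and, hits, Finset.mem_filter] at hp hp'
    simp only [Prod.mk.injEq] at heq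
    obtain ⟨⟨hlow, hb⟩, hg⟩ := heq
    have hℓ : ℓ = ℓ' := by
      refine levelAdj_unique (levelAdj_low ω ℓ hp.1) ?_
      rw [hlow, hb]
      exact levelAdj_low ω' ℓ' hp'.1
    subst hℓ
    obtain ⟨b, s, c⟩ := ω
    obtain ⟨b', s', c'⟩ := ω'
    simp only at hb hg hlow
    subst hb
    have hs : s = s' := by
      funext j
      have h1 := congrFun hg j
      have h2 := congrFun (congrArg Vtx.split hlow) j
      simp only [low] at h1 h2
      by_cases hj : j < ℓ
      · simpa [hj] using h1
      · simpa [hj] using h2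
    have hc : c = c' := by
      funext j
      have h1 := congrFun hg j
      have h2 := congrFun (congrArg Vtx.tag hlow) j
      simp only [low] at h1 h2
      by_cases hj : j < ℓ
      · simpa [hj] using h2
      · simpa [hj] using h1
    rw [hs, hc]
  · rintro ⟨⟨a, b⟩, g⟩ hq
    simp only [Finset.mem_product, Finset.mem_filter, Finset.mem_univ, true_and, and_true] at hq
    obtain ⟨⟨ℓ, hℓ⟩, hR⟩ := hq
    let ω : Conf D M := (b, (fun j => if j < ℓ then g j else a.split j),
      (fun j => if j < ℓ then a.tag j else g j))
    have hlow : low ω ℓ = a := by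
      ext j
      · simp only [low, ω, hℓ.2.1]
      · simp only [low, ω]
        split_ifs with hj
        · rw [hℓ.2.2.1 j hj]
        · rfl
      · simp only [low, ω]
        split_ifs with hj
        · rfl
        · rw [hℓ.2.2.2 j hj]
    refine ⟨⟨ω, ℓ⟩, ?_, ?_⟩
    · simp only [Finset.mem_sigma, Finset.mem_univ, true_and, hits, Finset.mem_filter]
      exact ⟨hℓ.1, by rw [hlow]; exact hR⟩
    · simp only [hlow, Prod.mk.injEq, true_and]
      refine ⟨rfl, ?_⟩
      funext j
      by_cases hj : j < ℓ <;> simp [ω, hj]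

/-- For fixed values of all other letters and a fixed set of hits, only the smallest letter at `t`
can be bad. Hence `t` is bad with probability at most `2 ^ D / M`. -/
lemma card_bad_mul_le {D M : ℕ} (R : Vtx D M → Vtx D M → Prop) (t : Fin D) :
    (Finset.univ.filter (Bad R t)).card * M ≤ Fintype.card (Conf D M) * 2 ^ D := by
  have hcard : Fintype.card (Conf D M) * 2 ^ D =
      (Finset.univ : Finset (Conf D M × Finset (Fin D))).card := by
    rw [Finset.card_univ, Fintype.card_prod (Conf D M), Fintype.card_finset, Fintype.card_fin]
  have hM : (Finset.filter (Bad R t) Finset.univ).card * M =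
      (Finset.filter (Bad R t) Finset.univ ×ˢ (Finset.univ : Finset (Fin M))).card := by
    rw [Finset.card_product, Finset.card_univ, Fintype.card_fin]
  rw [hcard, hM]
  refine Finset.card_le_card_of_injOn (fun p => (shift p.1 t p.2, hits R p.1))
    (fun _ _ => Finset.mem_univ _) ?_
  have key : ∀ (ω ω' : Conf D M) (m : Fin M), Bad R t ω' → shift ω t m = shift ω' t m →
      hits R ω = hits R ω' → ¬ ω.1.split t < ω'.1.split t := by
    intro ω ω' m hbad hsh hh hlt
    refine hbad.2 ⟨_, hlt, fun ℓ hℓ _ => ?_⟩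
    have hω : shift ω' t (ω.1.split t) = ω := by
      have := congrArg (fun ν => shift ν t (ω.1.split t)) hsh
      simp only [shift, Function.update_idem] at this
      simp only [shift]
      rw [← this]
      simp
    rw [hω, hh]
    exact hℓ
  rintro ⟨ω, m⟩ hp ⟨ω', m'⟩ hp' heq
  simp only [Finset.coe_product, Set.mem_prod, Finset.coe_filter, Finset.mem_univ, true_and,
    Set.mem_ofPred_eq, Finset.coe_univ, Set.mem_univ, and_true] at hp hp'
  simp only [Prod.mk.injEq] at heq
  obtain ⟨hsh, hh⟩ := heq
  have hm : m = m' := by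
    have := congrArg (fun ν : Conf D M => ν.1.split t) hsh
    simpa [shift] using this
  subst hm
  have hst : ω.1.split t = ω'.1.split t :=
    le_antisymm (not_lt.1 (key ω' ω m hp hsh.symm hh.symm)) (not_lt.1 (key ω ω' m hp' hsh hh))
  have hω : ω = ω' := by
    have := congrArg (fun ν => shift ν t (ω.1.split t)) hsh
    simp only [shift, Function.update_idem] at this
    rw [hst] at this
    nth_rewrite 1 [← hst] at this
    simp only [Function.update_eq_self, Prod.mk.injEq, Vtx.mk.injEq] at this
    exact Prod.ext (Vtx.ext this.1.1 this.1.2.1 this.1.2.2) this.2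
  rw [hω]

/-- Every bit is `true` with probability one half, so the full host graph is hit `D / 2` times on
average. -/
lemma card_le_two_mul_sum_hits {D M : ℕ} (R : Vtx D M → Vtx D M → Prop)
    (hR : ∀ ℓ a b, LevelAdj ℓ a b → R a b) :
    D * Fintype.card (Conf D M) ≤ 2 * ∑ ω : Conf D M, (hits R ω).card := by
  have h1 : ∀ ℓ : Fin D, Fintype.card (Conf D M) ≤
      (Finset.univ.filter fun ω : Conf D M => ℓ ∈ hits R ω).card * 2 := by
    intro ℓ
    rw [← Finset.card_univ, ← Fintype.card_bool, ← Finset.card_univ (α := Bool),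
      ← Finset.card_product]
    refine Finset.card_le_card_of_injOn
      (fun ω => ((⟨Function.update ω.1.branch ℓ true, ω.1.split, ω.1.tag⟩, ω.2),
        ω.1.branch ℓ)) ?_ ?_
    · intro ω _
      simp only [Finset.coe_product, Set.mem_prod, Finset.coe_filter, Finset.mem_univ, true_and,
        Set.mem_ofPred_eq, Finset.coe_univ, Set.mem_univ, and_true, hits, Finset.mem_filter,
        Function.update_self]
      exact hR ℓ _ _ (levelAdj_low _ ℓ (by simp))
    · rintro ⟨⟨x, s, c⟩, f⟩ _ ⟨⟨x', s', c'⟩, f'⟩ _ heq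
      simp only [Prod.mk.injEq, Vtx.mk.injEq] at heq ⊢
      obtain ⟨⟨⟨hx, hs, hc⟩, hf⟩, hb⟩ := heq
      refine ⟨⟨?_, hs, hc⟩, hf⟩
      have := congrArg (fun y => Function.update y ℓ (x ℓ)) hx
      simp only [Function.update_idem, Function.update_eq_self] at this
      rw [this, hb]
      simp
  have h2 : ∑ ω : Conf D M, (hits R ω).card =
      ∑ ℓ : Fin D, (Finset.univ.filter fun ω : Conf D M => ℓ ∈ hits R ω).card := by
    simp only [Finset.card_eq_sum_ones, Finset.sum_filter]
    rw [Finset.sum_comm]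
    refine Finset.sum_congr rfl fun ω _ => ?_
    rw [← Finset.sum_filter]
    congr 1
    ext; simp
  rw [h2, Finset.mul_sum]
  calc D * Fintype.card (Conf D M) = ∑ _ℓ : Fin D, Fintype.card (Conf D M) := by simp
    _ ≤ _ := Finset.sum_le_sum fun ℓ _ => by rw [mul_comm]; exact h1 ℓ

/-- If no sample has more than `k` hits that are not bad, then `R` is hit at most `k + 1` times on
average: for `M = D * 2 ^ D` a sample has at most one bad level on average. -/
lemma sum_hits_le {D M k : ℕ} (hD : 0 < D) (hM : M = D * 2 ^ D) (R : Vtx D M → Vtx D M → Prop)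
    (hk : ∀ ω, ((hits R ω).filter fun t => ¬ Bad R t ω).card ≤ k) :
    ∑ ω : Conf D M, (hits R ω).card ≤ (k + 1) * Fintype.card (Conf D M) := by
  have hMpos : 0 < M := by rw [hM]; positivity
  have h1 : ∀ ω : Conf D M, (hits R ω).card ≤
      k + (Finset.univ.filter fun t => Bad R t ω).card := by
    intro ω
    rw [← Finset.card_filter_add_card_filter_not (s := hits R ω) (fun t => ¬ Bad R t ω)]
    refine Nat.add_le_add (hk ω) (Finset.card_le_card fun t ht => ?_)
    simpa using (Finset.mem_filter.1 ht).2
  have h2 : ∑ ω : Conf D M, (Finset.univ.filter fun t => Bad R t ω).card =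
      ∑ t : Fin D, (Finset.univ.filter (Bad R t)).card := by
    simp only [Finset.card_eq_sum_ones, Finset.sum_filter]
    rw [Finset.sum_comm]
  have h3 : (∑ t : Fin D, (Finset.univ.filter (Bad R t)).card) * M ≤
      Fintype.card (Conf D M) * M := by
    rw [Finset.sum_mul]
    calc _ ≤ ∑ _t : Fin D, Fintype.card (Conf D M) * 2 ^ D :=
          Finset.sum_le_sum fun t _ => card_bad_mul_le R t
      _ = _ := by simp [hM]; ring
  have h4 := Nat.le_of_mul_le_mul_right h3 hMpos
  calc _ ≤ ∑ ω : Conf D M, (k + (Finset.univ.filter fun t => Bad R t ω).card) :=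
        Finset.sum_le_sum fun ω _ => h1 ω
    _ = k * Fintype.card (Conf D M) + ∑ t : Fin D, (Finset.univ.filter (Bad R t)).card := by
        rw [Finset.sum_add_distrib, h2]; simp [mul_comm]
    _ ≤ _ := by rw [add_mul, one_mul]; omega

/-! ### Half graphs in dense subgraphs of the host -/

/-- The lexicographic precedence of the words `(branch, split)`. -/
def Prec {D M : ℕ} (u v : Vtx D M) : Prop :=
  ∃ t, (∀ j < t, u.branch j = v.branch j ∧ u.split j = v.split j) ∧
    (u.branch t < v.branch t ∨ u.branch t = v.branch t ∧ u.split t < v.split t)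

lemma exists_equiv (D M : ℕ) :
    ∃ (n : ℕ) (e : Vtx D M ≃ Fin n), ∀ u v, Prec u v → e u < e v := by
  let f : Vtx D M → Lex (Lex (Fin D → Lex (Bool × Fin M)) × Fin (Fintype.card (Vtx D M))) :=
    fun v => toLex (toLex fun j => toLex (v.branch j, v.split j), Fintype.equivFin _ v)
  have hf : Function.Injective f := by
    intro u v h
    have := congrArg (fun z => (ofLex z).2) h
    exact (Fintype.equivFin _).injective this
  let L : LinearOrder (Vtx D M) := LinearOrder.lift' f hf
  refine ⟨_, (Fintype.orderIsoFinOfCardEq (Vtx D M) rfl).symm.toEquiv, fun u v h => ?_⟩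
  have huv : u < v := by
    change f u < f v
    obtain ⟨t, h1, h2⟩ := h
    rw [Prod.Lex.lt_iff]
    left
    refine ⟨t, fun j hj => ?_, ?_⟩
    · change toLex (_, _) = toLex (_, _)
      rw [(h1 j hj).1, (h1 j hj).2]
    · change toLex (_, _) < toLex (_, _)
      rw [Prod.Lex.toLex_lt_toLex]
      exact h2
  exact (Fintype.orderIsoFinOfCardEq (Vtx D M) rfl).symm.strictMono huv

lemma prec_of_levelAdj {D M : ℕ} {ℓ : Fin D} {a b : Vtx D M} (h : LevelAdj ℓ a b) :
    Prec a b := by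
  refine ⟨ℓ, fun j hj => ⟨?_, h.2.2.1 j hj⟩, Or.inl ?_⟩
  · rw [h.2.1, Function.update_of_ne (ne_of_lt hj)]
  · rw [h.2.1, h.1]; simp

/-- From `k` hits that are not bad one reads off a copy of the interleaved half graph
`a₁ < b₁ < a₂ < b₂ < ⋯`: the lower vertices at these levels, and the upper vertex with its letter
at the respective level decreased. -/
lemma exists_half_graph {D M k : ℕ} (R : Vtx D M → Vtx D M → Prop) (ω : Conf D M)
    (h : k ≤ ((hits R ω).filter fun t => ¬ Bad R t ω).card) :
    ∃ a b : Fin k → Vtx D M, (∀ i, Prec (a i) (b i)) ∧ (∀ i j, i < j → Prec (b i) (a j)) ∧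
      ∀ i j, i ≤ j → R (a i) (b j) := by
  obtain ⟨S, hS, hSc⟩ := Finset.exists_subset_card_eq h
  let t := S.orderEmbOfFin hSc
  have ht : ∀ i, t i ∈ hits R ω ∧ ∃ m < ω.1.split (t i),
      ∀ ℓ ∈ hits R ω, ℓ ≤ t i → ℓ ∈ hits R (shift ω (t i) m) := by
    intro i
    have := Finset.mem_filter.1 (hS (S.orderEmbOfFin_mem hSc i))
    refine ⟨this.1, ?_⟩
    by_contra hcon
    exact this.2 ⟨this.1, hcon⟩
  choose hhit m hm hkeep using ht
  refine ⟨fun i => low ω (t i), fun i => (shift ω (t i) (m i)).1, fun i => ?_, fun i j hij => ?_,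
    fun i j hij => ?_⟩
  · simp only [hits, Finset.mem_filter] at hhit
    have := levelAdj_low (shift ω (t i) (m i)) (t i) (hhit i).2.1
    rw [low_shift _ _ _ _ le_rfl] at this
    exact prec_of_levelAdj this
  · have hlt : t i < t j := t.strictMono hij
    refine ⟨t i, fun l hl => ?_, Or.inr ⟨?_, ?_⟩⟩
    · have hl' := hl.trans hlt
      simp [shift, low, hl', hl.ne, hl'.ne]
    · simp [shift, low, hlt.ne]
    · simpa [shift, low, hlt] using hm i
  · have := hkeep j (t i) (hhit i) (t.monotone hij)
    simp only [hits, Finset.mem_filter] at this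
    have h2 := this.2.2
    rwa [low_shift _ _ _ _ (t.monotone hij)] at h2

/-- A finite ordered graph without a monotone path of length two embeds in the interleaved half
graph: the `i`-th vertex goes to `a i` if it has a later neighbour, and to `b i` otherwise. -/
lemma containsOrderedCopy_of_half_graph {α β : Type*} [Fintype α] [LinearOrder α] [LinearOrder β]
    (F : SimpleGraph α) (hF : ¬ HasMonotonePathTwo F) {H : SimpleGraph β} (G' : H.Subgraph)
    (a b : Fin (Fintype.card α) → β) (hab : ∀ i, a i < b i) (hba : ∀ i j, i < j → b i < a j)
    (hadj : ∀ i j, i ≤ j → G'.Adj (a i) (b j)) : ContainsOrderedCopy F G'.coe := by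
  let e := (Fintype.orderIsoFinOfCardEq α rfl).symm
  refine ⟨fun v => if ∃ w, v < w ∧ F.Adj v w
    then ⟨a (e v), G'.edge_vert (hadj (e v) (e v) le_rfl)⟩
    else ⟨b (e v), G'.edge_vert (hadj (e v) (e v) le_rfl).symm⟩, ?_, ?_⟩
  · intro u v huv
    have h1 : e u < e v := e.strictMono huv
    have h2 := hba _ _ h1
    dsimp only
    split_ifs
    · exact Subtype.mk_lt_mk.2 ((hab _).trans h2)
    · exact Subtype.mk_lt_mk.2 (((hab _).trans h2).trans (hab _))
    · exact Subtype.mk_lt_mk.2 h2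
    · exact Subtype.mk_lt_mk.2 (h2.trans (hab _))
  · have key : ∀ u v, F.Adj u v → u < v → (∃ w, u < w ∧ F.Adj u w) ∧
        (¬ ∃ w, v < w ∧ F.Adj v w) ∧ G'.Adj (a (e u)) (b (e v)) := by
      intro u v huv hlt
      refine ⟨⟨v, hlt, huv⟩, ?_, hadj _ _ (e.monotone hlt.le)⟩
      rintro ⟨w, hvw, hw⟩
      exact hF ⟨u, v, w, hlt, hvw, huv, hw⟩
    intro u v huv
    rcases lt_or_gt_of_ne huv.ne with hlt | hlt
    · obtain ⟨h1, h2, h3⟩ := key u v huv hlt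
      simp only [h1, h2, if_true, if_false, SimpleGraph.Subgraph.coe_adj]
      exact h3
    · obtain ⟨h1, h2, h3⟩ := key v u huv.symm hlt
      simp only [h1, h2, if_true, if_false, SimpleGraph.Subgraph.coe_adj]
      exact h3.symm

/-! ### Edge counts and the upper bound for the density -/

lemma edgeCount_eq {β : Type*} [Fintype β] [LinearOrder β] (G : SimpleGraph β) :
    edgeCount G = (Finset.univ.filter fun p : β × β => p.1 < p.2 ∧ G.Adj p.1 p.2).card := by
  rw [edgeCount, ← Set.ncard_coe_finset]
  symm
  refine Set.ncard_congr (fun p _ => s(p.1, p.2)) ?_ ?_ ?_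
  · rintro ⟨u, v⟩ h
    simp only [Finset.coe_filter, Finset.mem_univ, true_and, Set.mem_ofPred_eq] at h
    exact h.2
  · rintro ⟨u, v⟩ ⟨u', v'⟩ h h' heq
    simp only [Finset.coe_filter, Finset.mem_univ, true_and, Set.mem_ofPred_eq] at h h'
    simp only [Sym2.eq_iff] at heq
    rcases heq with ⟨rfl, rfl⟩ | ⟨rfl, rfl⟩
    · rfl
    · exact absurd (h.1.trans h'.1) (lt_irrefl _)
  · intro z
    refine Sym2.ind (fun u v h => ?_) z
    have h' : G.Adj u v := h
    rcases lt_or_gt_of_ne h'.ne with hlt | hlt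
    · exact ⟨(u, v), by simp [hlt, h'], rfl⟩
    · exact ⟨(v, u), by simp [hlt, h'.symm], Sym2.eq_swap⟩

lemma edgeCount_coe {β : Type*} [Fintype β] [LinearOrder β] {G : SimpleGraph β}
    (G' : G.Subgraph) :
    edgeCount G'.coe =
      (Finset.univ.filter fun p : β × β => p.1 < p.2 ∧ G'.Adj p.1 p.2).card := by
  rw [edgeCount_eq]
  refine Finset.card_bij (fun p _ => (p.1.1, p.2.1)) ?_ ?_ ?_
  · rintro ⟨u, v⟩ h
    simpa using h
  · rintro ⟨u, v⟩ _ ⟨u', v'⟩ _ heq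
    simp only [Prod.mk.injEq] at heq
    exact Prod.ext (Subtype.ext heq.1) (Subtype.ext heq.2)
  · rintro ⟨u, v⟩ h
    simp only [Finset.mem_filter, Finset.mem_univ, true_and] at h
    exact ⟨(⟨u, G'.edge_vert h.2⟩, ⟨v, G'.edge_vert h.2.symm⟩), by simpa using h, rfl⟩

/-- The host graph with parameter `D`, transported to an initial segment of `ℕ`. -/
lemma exists_host {α : Type*} [Fintype α] [LinearOrder α] (F : SimpleGraph α)
    (hF : ¬ HasMonotonePathTwo F) (D : ℕ) (hD : 0 < D) :
    ∃ (n : ℕ) (G : SimpleGraph (Fin n)), 1 ≤ edgeCount G ∧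
      ∀ G' : G.Subgraph, ¬ ContainsOrderedCopy F G'.coe →
        edgeCount G'.coe * D ≤ 2 * (Fintype.card α + 1) * edgeCount G := by
  obtain ⟨M, hM⟩ : ∃ M, M = D * 2 ^ D := ⟨_, rfl⟩
  have hMpos : 0 < M := by rw [hM]; positivity
  have : Nonempty (Fin M) := ⟨⟨0, hMpos⟩⟩
  have : Nonempty (Vtx D M) :=
    ⟨⟨fun _ => true, fun _ => Classical.arbitrary _, fun _ => Classical.arbitrary _⟩⟩
  obtain ⟨n, e, he⟩ := exists_equiv D M
  let G : SimpleGraph (Fin n) :=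
    SimpleGraph.fromRel fun u v => ∃ ℓ, LevelAdj ℓ (e.symm u) (e.symm v)
  have hlt : ∀ ℓ a b, LevelAdj ℓ a b → e a < e b := fun ℓ a b h => he _ _ (prec_of_levelAdj h)
  have hG : ∀ u v, (u < v ∧ G.Adj u v) ↔ ∃ ℓ, LevelAdj ℓ (e.symm u) (e.symm v) := by
    intro u v
    constructor
    · rintro ⟨huv, -, h | ⟨ℓ, h⟩⟩
      · exact h
      · have := hlt _ _ _ h
        simp only [Equiv.apply_symm_apply] at this
        exact absurd huv this.asymm
    · rintro ⟨ℓ, h⟩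
      have := hlt _ _ _ h
      simp only [Equiv.apply_symm_apply] at this
      exact ⟨this, this.ne, Or.inl ⟨ℓ, h⟩⟩
  set K := Fintype.card (Fin D → Fin M) with hK
  have hKpos : 0 < K := Fintype.card_pos
  set W := Fintype.card (Conf D M) with hW
  have hWpos : 0 < W := Fintype.card_pos
  have count : ∀ G' : G.Subgraph, edgeCount G'.coe * K =
      ∑ ω : Conf D M, (hits (fun a b => G'.Adj (e a) (e b)) ω).card := by
    intro G'
    rw [sum_hits, edgeCount_coe]
    congr 1
    refine Finset.card_equiv (e.symm.prodCongr e.symm) ?_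
    rintro ⟨u, v⟩
    simp only [Finset.mem_filter, Finset.mem_univ, true_and, Equiv.prodCongr_apply, Prod.map,
      Equiv.apply_symm_apply]
    rw [← hG]
    exact ⟨fun h => ⟨⟨h.1, G'.adj_sub h.2⟩, h.2⟩, fun h => ⟨h.1.1, h.2⟩⟩
  have htop : edgeCount G * K =
      ∑ ω : Conf D M, (hits (fun a b => G.Adj (e a) (e b)) ω).card := by
    have h1 := count ⊤
    rw [edgeCount_coe] at h1
    rw [edgeCount_eq]
    exact h1
  have hlow : D * W ≤ 2 * (edgeCount G * K) := by
    rw [htop]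
    refine card_le_two_mul_sum_hits _ fun ℓ a b h => ?_
    exact ((hG (e a) (e b)).2 ⟨ℓ, by simpa using h⟩).2
  refine ⟨n, G, ?_, fun G' hfree => ?_⟩
  · by_contra hcon
    have h0 : edgeCount G = 0 := by omega
    rw [h0] at hlow
    have : 0 < D * W := Nat.mul_pos hD hWpos
    omega
  · have hle : edgeCount G'.coe * K ≤ (Fintype.card α + 1) * W := by
      rw [count]
      refine sum_hits_le hD hM _ fun ω => ?_
      by_contra hcon
      obtain ⟨a, b, h1, h2, h3⟩ := exists_half_graph _ ω (not_le.1 hcon).le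
      exact hfree (containsOrderedCopy_of_half_graph F hF G' (fun i => e (a i)) (fun i => e (b i))
        (fun i => he _ _ (h1 i)) (fun i j hij => he _ _ (h2 i j hij)) h3)
    refine Nat.le_of_mul_le_mul_right ?_ hKpos
    calc edgeCount G'.coe * D * K = D * (edgeCount G'.coe * K) := by ring
      _ ≤ D * ((Fintype.card α + 1) * W) := Nat.mul_le_mul_left _ hle
      _ = (Fintype.card α + 1) * (D * W) := by ring
      _ ≤ (Fintype.card α + 1) * (2 * (edgeCount G * K)) := Nat.mul_le_mul_left _ hlow
      _ = _ := by ring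

lemma relTuranDensityIn_nonneg {α β : Type*} [Preorder α] [Preorder β]
    (F : SimpleGraph α) (G : SimpleGraph β) : 0 ≤ relTuranDensityIn F G := by
  refine Real.sSup_nonneg ?_
  rintro r ⟨G', -, rfl⟩
  positivity

lemma relTuranDensity_nonneg {α : Type*} [Preorder α] (F : SimpleGraph α) :
    0 ≤ relTuranDensity F := by
  refine Real.sInf_nonneg ?_
  rintro r ⟨n, G, -, rfl⟩
  exact relTuranDensityIn_nonneg F G

lemma relTuranDensity_le {α : Type*} [Fintype α] [LinearOrder α] (F : SimpleGraph α)
    (hF : ¬ HasMonotonePathTwo F) (D : ℕ) (hD : 0 < D) :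
    relTuranDensity F ≤ 2 * (Fintype.card α + 1) / D := by
  obtain ⟨n, G, hG, hmain⟩ := exists_host F hF D hD
  have hbdd : BddBelow {r : ℝ | ∃ (n : ℕ) (G : SimpleGraph (Fin n)),
      1 ≤ edgeCount G ∧ r = relTuranDensityIn F G} := by
    refine ⟨0, ?_⟩
    rintro r ⟨n, G, -, rfl⟩
    exact relTuranDensityIn_nonneg F G
  have hle : relTuranDensity F ≤ relTuranDensityIn F G := csInf_le hbdd ⟨n, G, hG, rfl⟩
  refine hle.trans (Real.sSup_le ?_ (by positivity))
  · rintro r ⟨H, hfree, rfl⟩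
    have hG' : (0 : ℝ) < edgeCount G := by exact_mod_cast hG
    have hD' : (0 : ℝ) < D := by exact_mod_cast hD
    rw [div_le_div_iff₀ hG' hD']
    exact_mod_cast hmain H hfree

/-! ### The lower bound for graphs with a monotone path -/

/-- A quarter of the two-colourings send a given ordered pair of distinct points to
`(true, false)`. -/
lemma two_pow_le {n : ℕ} (u v : Fin n) (huv : u ≠ v) :
    2 ^ n ≤ 4 * (Finset.univ.filter fun f : Fin n → Bool => f u = true ∧ f v = false).card := by
  have h4 : 4 = (Finset.univ : Finset (Bool × Bool)).card := by simp
  have h2 : 2 ^ n = (Finset.univ : Finset (Fin n → Bool)).card := by simp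
  rw [h2, h4, ← Finset.card_product]
  refine Finset.card_le_card_of_injOn (fun f => ((f u, f v),
    Function.update (Function.update f u true) v false)) ?_ ?_
  · intro f _
    simp [huv]
  · intro f _ g _ heq
    simp only [Prod.mk.injEq] at heq
    obtain ⟨⟨h1, h2⟩, h3⟩ := heq
    funext j
    by_cases hjv : j = v
    · rw [hjv, h2]
    · by_cases hju : j = u
      · rw [hju, h1]
      · simpa [hju, hjv] using congrFun h3 j

/-- For a suitable two-colouring of the vertices, the edges going from colour `true` up to colour
`false` make up a quarter of the graph, and they contain no monotone path of length two. -/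
lemma quarter_le {α : Type*} [Preorder α] (F : SimpleGraph α) (hF : HasMonotonePathTwo F)
    {n : ℕ} (G : SimpleGraph (Fin n)) (hG : 1 ≤ edgeCount G) :
    1 / 4 ≤ relTuranDensityIn F G := by
  let E := Finset.univ.filter fun p : Fin n × Fin n => p.1 < p.2 ∧ G.Adj p.1 p.2
  have hE : edgeCount G = E.card := edgeCount_eq G
  let c : (Fin n → Bool) → ℕ := fun f => (E.filter fun p => f p.1 = true ∧ f p.2 = false).card
  have hsum : ∑ _f : Fin n → Bool, edgeCount G ≤ ∑ f, 4 * c f := by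
    calc ∑ _f : Fin n → Bool, edgeCount G = ∑ _p ∈ E, 2 ^ n := by simp [hE, mul_comm]
      _ ≤ ∑ p ∈ E, 4 *
          (Finset.univ.filter fun f : Fin n → Bool => f p.1 = true ∧ f p.2 = false).card :=
        Finset.sum_le_sum fun p hp => two_pow_le _ _ (Finset.mem_filter.1 hp).2.1.ne
      _ = _ := by
        rw [← Finset.mul_sum, ← Finset.mul_sum]
        simp only [c, Finset.card_eq_sum_ones, Finset.sum_filter]
        rw [Finset.sum_comm]
  obtain ⟨f, -, hf⟩ := Finset.exists_le_of_sum_le Finset.univ_nonempty hsum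
  let G' : G.Subgraph :=
    { verts := Set.univ
      Adj := fun a b => G.Adj a b ∧
        (a < b ∧ f a = true ∧ f b = false ∨ b < a ∧ f b = true ∧ f a = false)
      adj_sub := fun h => h.1
      edge_vert := fun _ => Set.mem_univ _
      symm := ⟨fun a b h => ⟨h.1.symm, h.2.symm⟩⟩ }
  have hcount : edgeCount G'.coe = c f := by
    rw [edgeCount_coe]
    congr 1
    ext ⟨a, b⟩
    simp only [E, G', Finset.mem_filter, Finset.mem_univ, true_and]
    constructor
    · rintro ⟨hab, hadj, h | h⟩
      · exact ⟨⟨hab, hadj⟩, h.2⟩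
      · exact absurd hab h.1.asymm
    · rintro ⟨⟨hab, hadj⟩, h⟩
      exact ⟨hab, hadj, Or.inl ⟨hab, h⟩⟩
  have hfree : ¬ ContainsOrderedCopy F G'.coe := by
    rintro ⟨φ, hφ, hadj⟩
    obtain ⟨u, v, w, huv, hvw, h1, h2⟩ := hF
    have k1 : ((φ u : Fin n)) < φ v := hφ huv
    have k2 : ((φ v : Fin n)) < φ w := hφ hvw
    have l1 : f (φ v) = false := by
      rcases (hadj u v h1).2 with h | h
      · exact h.2.2
      · exact absurd k1 h.1.asymm
    have l2 : f (φ v) = true := by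
      rcases (hadj v w h2).2 with h | h
      · exact h.2.1
      · exact absurd k2 h.1.asymm
    rw [l1] at l2
    exact absurd l2 (by decide)
  have hbdd : BddAbove {r : ℝ | ∃ G' : G.Subgraph, ¬ ContainsOrderedCopy F G'.coe ∧
      r = (edgeCount G'.coe : ℝ) / (edgeCount G : ℝ)} := by
    refine ((Set.finite_range fun G' : G.Subgraph =>
      (edgeCount G'.coe : ℝ) / (edgeCount G : ℝ)).subset ?_).bddAbove
    rintro r ⟨G', -, rfl⟩
    exact ⟨G', rfl⟩
  refine le_trans ?_ (le_csSup hbdd ⟨G', hfree, rfl⟩)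
  have hG' : (0 : ℝ) < edgeCount G := by exact_mod_cast hG
  rw [div_le_div_iff₀ (by norm_num) hG', hcount]
  have : (edgeCount G : ℝ) ≤ 4 * c f := by exact_mod_cast hf
  linarith

/-- For every ordered graph `F`, `ρ_<(F) = 0` if and only if `F` contains
no monotone path of length two. -/
theorem rho_eq_zero_iff
    {α : Type*} [Fintype α] [LinearOrder α] (F : SimpleGraph α) :
    relTuranDensity F = 0 ↔ ¬ HasMonotonePathTwo F := by
  constructor
  · intro h0 hF
    have h1 : (1 / 4 : ℝ) ≤ relTuranDensity F := by
      -- Without a graph having an edge the infimum would be the junk value `sInf ∅ = 0`.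
      refine le_csInf ⟨_, 2, ⊤, ?_, rfl⟩ ?_
      · rw [edgeCount_eq]
        exact Finset.card_pos.2 ⟨(0, 1), by simp⟩
      · rintro r ⟨n, G, hG, rfl⟩
        exact quarter_le F hF G hG
    rw [h0] at h1
    norm_num at h1
  · intro hF
    refine le_antisymm (le_of_forall_pos_le_add fun ε hε => ?_) (relTuranDensity_nonneg F)
    obtain ⟨D, hD⟩ := exists_nat_gt (2 * (Fintype.card α + 1 : ℝ) / ε)
    have hDpos : (0 : ℝ) < D := lt_trans (by positivity) hD
    refine (relTuranDensity_le F hF D (by exact_mod_cast hDpos)).trans ?_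
    rw [zero_add, div_le_iff₀ hDpos, mul_comm ε]
    exact ((div_lt_iff₀ hε).1 hD).le
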